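/- Let f̃_1, f̃_2: D([0,T]; ℝ^d) → ℝ both be pathwise Malliavin differentiable, with f̃_i and each map ω ↦ 𝔻_t f̃_i(ω) continuous with respect to the uniform norm, and with 𝔻f̃_i having left limits and boundedness preserving (i = 1, 2). If f̃_1(ω) = f̃_2(ω) for every continuous ω, then for every continuous path ω ∈ C([0,T]; ℝ^d) one has 𝔻_t f̃_1(ω) = 𝔻_t f̃_2(ω) for Lebesgue-almost every t ∈ [0,T]. Consequently, the pathwise Malliavin derivative of a functional on continuous paths defined through any such extension to càdlàg paths is, on continuous paths, independent of the chosen extension up to a Lebesgue-null set of times. -/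

import Mathlib

open MeasureTheory Filter Set

noncomputable section

/-- `ω : ℝ → ℝ^d` is càdlàg on `[0,T]`: right-continuous at every `t ∈ [0,T)` (within `[0,T]`)
and with left limits (within `[0,T]`) at every `t ∈ (0,T]`. -/
def CadlagOn (T : ℝ) {d : ℕ} (ω : ℝ → Fin d → ℝ) : Prop :=
  (∀ t ∈ Set.Ico (0 : ℝ) T, Tendsto ω (nhdsWithin t (Set.Ioc t T)) (nhds (ω t))) ∧
  (∀ t ∈ Set.Ioc (0 : ℝ) T, ∃ l : Fin d → ℝ, Tendsto ω (nhdsWithin t (Set.Ico 0 t)) (nhds l))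

/-- The bump path `e·1_{[t,T]}`. -/
def bump (T : ℝ) {d : ℕ} (t : ℝ) (e : Fin d → ℝ) : ℝ → Fin d → ℝ :=
  Set.indicator (Set.Icc t T) (fun _ => e)

/-- `f` is pathwise Malliavin differentiable on `D([0,T]; ℝ^d)` with derivative `Df`:
for every càdlàg `ω`, every `t ∈ [0,T]` and every `e ∈ ℝ^d`,
`(f(ω + ε e 1_{[t,T]}) − f(ω))/ε → ⟨Df ω t, e⟩` as `ε → 0`. -/
def HasPathwiseMalliavinDeriv (T : ℝ) {d : ℕ} (f : (ℝ → Fin d → ℝ) → ℝ)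
    (Df : (ℝ → Fin d → ℝ) → ℝ → Fin d → ℝ) : Prop :=
  ∀ ω : ℝ → Fin d → ℝ, CadlagOn T ω → ∀ t ∈ Set.Icc (0 : ℝ) T, ∀ e : Fin d → ℝ,
    Tendsto (fun ε : ℝ => (f (ω + ε • bump T t e) - f ω) / ε)
      (nhdsWithin 0 {(0 : ℝ)}ᶜ) (nhds (∑ i, Df ω t i * e i))

/-- Continuity of a real functional on càdlàg paths with respect to the uniform norm on `[0,T]`
(sequential formulation). -/
def UnifContOnCadlag (T : ℝ) {d : ℕ} (f : (ℝ → Fin d → ℝ) → ℝ) : Prop :=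
  ∀ (ω : ℝ → Fin d → ℝ) (ωs : ℕ → ℝ → Fin d → ℝ),
    CadlagOn T ω → (∀ n, CadlagOn T (ωs n)) →
    TendstoUniformlyOn ωs ω atTop (Set.Icc 0 T) →
    Tendsto (fun n => f (ωs n)) atTop (nhds (f ω))

/-- Continuity of an `ℝ^d`-valued functional on càdlàg paths with respect to the uniform norm
on `[0,T]` (sequential formulation). -/
def UnifContOnCadlagVec (T : ℝ) {d : ℕ} (F : (ℝ → Fin d → ℝ) → Fin d → ℝ) : Prop :=
  ∀ (ω : ℝ → Fin d → ℝ) (ωs : ℕ → ℝ → Fin d → ℝ),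
    CadlagOn T ω → (∀ n, CadlagOn T (ωs n)) →
    TendstoUniformlyOn ωs ω atTop (Set.Icc 0 T) →
    Tendsto (fun n => F (ωs n)) atTop (nhds (F ω))

/-- `F : [0,T] × D([0,T];ℝ^d) → ℝ^d` has left limits: whenever `ω^n → ω` uniformly on `[0,T]`
and `t^n ↑ t` with `t^n < t`, `F(t^n, ω^n)` converges to a limit depending only on `(t, ω)`. -/
def HasLeftLimits (T : ℝ) {d : ℕ} (F : (ℝ → Fin d → ℝ) → ℝ → Fin d → ℝ) : Prop :=
  ∀ ω : ℝ → Fin d → ℝ, CadlagOn T ω → ∀ t ∈ Set.Ioc (0 : ℝ) T, ∃ l : Fin d → ℝ,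
    ∀ (ωs : ℕ → ℝ → Fin d → ℝ) (ts : ℕ → ℝ),
      (∀ n, CadlagOn T (ωs n)) →
      TendstoUniformlyOn ωs ω atTop (Set.Icc 0 T) →
      (∀ n, ts n < t) → Monotone ts → Tendsto ts atTop (nhds t) →
      Tendsto (fun n => F (ωs n) (ts n)) atTop (nhds l)

/-- `F` is boundedness preserving: `sup_{t ∈ [0,T]} sup_{‖ω‖_∞ < K} |F(t, ω)| < ∞` for every
`K > 0`. -/
def BoundednessPreserving (T : ℝ) {d : ℕ} (F : (ℝ → Fin d → ℝ) → ℝ → Fin d → ℝ) : Prop :=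
  ∀ K : ℝ, 0 < K → ∃ M : ℝ,
    ∀ ω : ℝ → Fin d → ℝ, CadlagOn T ω → (∀ s ∈ Set.Icc (0 : ℝ) T, ‖ω s‖ < K) →
      ∀ t ∈ Set.Icc (0 : ℝ) T, ‖F ω t‖ ≤ M

end

theorem CadlagOn.add {T : ℝ} {d : ℕ} {ω η : ℝ → Fin d → ℝ} (hω : CadlagOn T ω)
    (hη : CadlagOn T η) : CadlagOn T (ω + η) := by
  refine ⟨fun t ht => (hω.1 t ht).add (hη.1 t ht), fun t ht => ?_⟩
  obtain ⟨l, hl⟩ := hω.2 t ht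
  obtain ⟨m, hm⟩ := hη.2 t ht
  exact ⟨l + m, hl.add hm⟩

theorem CadlagOn.const_smul {T : ℝ} {d : ℕ} {ω : ℝ → Fin d → ℝ} (hω : CadlagOn T ω) (c : ℝ) :
    CadlagOn T (c • ω) := by
  refine ⟨fun t ht => (hω.1 t ht).const_smul c, fun t ht => ?_⟩
  obtain ⟨l, hl⟩ := hω.2 t ht
  exact ⟨c • l, hl.const_smul c⟩

theorem ContinuousOn.cadlagOn {T : ℝ} {d : ℕ} {ω : ℝ → Fin d → ℝ}
    (hω : ContinuousOn ω (Icc 0 T)) : CadlagOn T ω :=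
  ⟨fun t ht => (hω t ⟨ht.1, ht.2.le⟩).mono_left
      (nhdsWithin_mono t fun _ hx => ⟨ht.1.trans hx.1.le, hx.2⟩),
    fun t ht => ⟨ω t, (hω t ⟨ht.1.le, ht.2⟩).mono_left
      (nhdsWithin_mono t fun _ hx => ⟨hx.1, hx.2.le.trans ht.2⟩)⟩⟩

theorem cadlagOn_bump (T : ℝ) {d : ℕ} (s : ℝ) (e : Fin d → ℝ) : CadlagOn T (bump T s e) := by
  refine ⟨fun t ht => ?_, fun t ht => ?_⟩
  · refine tendsto_nhds_of_eventually_eq ?_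
    rcases le_or_gt s t with hst | hst
    · filter_upwards [self_mem_nhdsWithin] with x hx
      rw [bump, indicator_of_mem (mem_Icc.2 ⟨hst.trans hx.1.le, hx.2⟩),
        indicator_of_mem (mem_Icc.2 ⟨hst, ht.2.le⟩)]
    · filter_upwards [nhdsWithin_le_nhds (Iio_mem_nhds hst)] with x hx
      rw [bump, indicator_of_notMem fun h => (not_le.2 hx) h.1,
        indicator_of_notMem fun h => (not_le.2 hst) h.1]
  · rcases lt_or_ge s t with hst | hst
    · refine ⟨e, tendsto_nhds_of_eventually_eq ?_⟩
      filter_upwards [self_mem_nhdsWithin, nhdsWithin_le_nhds (Ioi_mem_nhds hst)] with x hx hx'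
      rw [bump, indicator_of_mem (mem_Icc.2 ⟨le_of_lt hx', hx.2.le.trans ht.2⟩)]
    · refine ⟨0, tendsto_nhds_of_eventually_eq ?_⟩
      filter_upwards [self_mem_nhdsWithin] with x hx
      rw [bump, indicator_of_notMem fun h => (not_le.2 (hx.2.trans_le hst)) h.1]

theorem HasPathwiseMalliavinDeriv.sub {T : ℝ} {d : ℕ} {f₁ f₂ : (ℝ → Fin d → ℝ) → ℝ}
    {Df₁ Df₂ : (ℝ → Fin d → ℝ) → ℝ → Fin d → ℝ} (h₁ : HasPathwiseMalliavinDeriv T f₁ Df₁)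
    (h₂ : HasPathwiseMalliavinDeriv T f₂ Df₂) :
    HasPathwiseMalliavinDeriv T (f₁ - f₂) (Df₁ - Df₂) := by
  intro ω hω t ht e
  convert (h₁ ω hω t ht e).sub (h₂ ω hω t ht e) using 2
  · simp only [Pi.sub_apply]
    ring
  · simp [sub_mul, Finset.sum_sub_distrib]

theorem UnifContOnCadlag.sub {T : ℝ} {d : ℕ} {f₁ f₂ : (ℝ → Fin d → ℝ) → ℝ}
    (h₁ : UnifContOnCadlag T f₁) (h₂ : UnifContOnCadlag T f₂) : UnifContOnCadlag T (f₁ - f₂) :=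
  fun ω ωs hω hωs h => (h₁ ω ωs hω hωs h).sub (h₂ ω ωs hω hωs h)

theorem HasLeftLimits.sub {T : ℝ} {d : ℕ} {F₁ F₂ : (ℝ → Fin d → ℝ) → ℝ → Fin d → ℝ}
    (h₁ : HasLeftLimits T F₁) (h₂ : HasLeftLimits T F₂) : HasLeftLimits T (F₁ - F₂) := by
  intro ω hω t ht
  obtain ⟨l₁, hl₁⟩ := h₁ ω hω t ht
  obtain ⟨l₂, hl₂⟩ := h₂ ω hω t ht
  exact ⟨l₁ - l₂, fun ωs ts h h' h'' hm hts =>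
    (hl₁ ωs ts h h' h'' hm hts).sub (hl₂ ωs ts h h' h'' hm hts)⟩

/-- A sequence converging to `t` strictly from below has a monotone subsequence. -/
theorem exists_monotone_subseq_of_tendsto_of_lt {t : ℝ} {u : ℕ → ℝ} (hu : ∀ n, u n < t)
    (hlim : Tendsto u atTop (nhds t)) : ∃ φ : ℕ → ℕ, StrictMono φ ∧ Monotone (u ∘ φ) := by
  obtain ⟨φ, hφ | hφ⟩ := exists_increasing_or_nonincreasing_subseq (· ≤ ·) u
  · exact ⟨φ, φ.strictMono, monotone_nat_of_le_succ fun n => hφ n (n + 1) n.lt_succ_self⟩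
  · have hle : t ≤ u (φ 0) := by
      refine le_of_tendsto (hlim.comp φ.strictMono.tendsto_atTop) ?_
      filter_upwards [eventually_gt_atTop 0] with n hn
      exact (not_le.1 (hφ 0 n hn)).le
    exact absurd (hu _) (not_lt.2 hle)

/-- Neighbourhood form of the existence of left limits. -/
theorem HasLeftLimits.exists_limit_forall_mem_nhds {T : ℝ} {d : ℕ}
    {F : (ℝ → Fin d → ℝ) → ℝ → Fin d → ℝ} (hF : HasLeftLimits T F) {ω : ℝ → Fin d → ℝ}
    (hω : CadlagOn T ω) {t : ℝ} (ht : t ∈ Ioc 0 T) :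
    ∃ l : Fin d → ℝ, ∀ U ∈ nhds l, ∃ δ > 0, ∀ s ∈ Ioo (t - δ) t, ∀ η, CadlagOn T η →
      (∀ u ∈ Icc 0 T, ‖η u - ω u‖ ≤ δ) → F η s ∈ U := by
  obtain ⟨l, hl⟩ := hF ω hω t ht
  refine ⟨l, fun U hU => ?_⟩
  by_contra! hcon
  choose s hs η hη hηω hnot using fun n : ℕ => hcon (1 / ((n : ℝ) + 1)) (by positivity)
  have hz : Tendsto (fun n : ℕ => 1 / ((n : ℝ) + 1)) atTop (nhds 0) :=
    tendsto_one_div_add_atTop_nhds_zero_nat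
  have hst : Tendsto s atTop (nhds t) :=
    tendsto_of_tendsto_of_tendsto_of_le_of_le (by simpa using hz.const_sub t) tendsto_const_nhds
      (fun n => (hs n).1.le) fun n => (hs n).2.le
  have hunif : TendstoUniformlyOn η ω atTop (Icc 0 T) := by
    rw [Metric.tendstoUniformlyOn_iff]
    intro ε hε
    filter_upwards [hz.eventually_lt_const hε] with n hn u hu
    rw [dist_comm, dist_eq_norm]
    exact (hηω n u hu).trans_lt hn
  obtain ⟨φ, hφ, hmono⟩ := exists_monotone_subseq_of_tendsto_of_lt (fun n => (hs n).2) hst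
  have hlim := hl (η ∘ φ) (s ∘ φ) (fun n => hη _)
    (fun v hv => hφ.tendsto_atTop.eventually (hunif v hv))
    (fun n => (hs _).2) hmono (hst.comp hφ.tendsto_atTop)
  obtain ⟨n, hn⟩ := (hlim.eventually hU).exists
  exact hnot _ hn

/-- Mean value inequality in the direction of a bump. -/
theorem HasPathwiseMalliavinDeriv.mul_le_sub {T : ℝ} {d : ℕ} {g : (ℝ → Fin d → ℝ) → ℝ}
    {Dg : (ℝ → Fin d → ℝ) → ℝ → Fin d → ℝ} (hg : HasPathwiseMalliavinDeriv T g Dg)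
    {ω : ℝ → Fin d → ℝ} (hω : CadlagOn T ω) {s : ℝ} (hs : s ∈ Icc 0 T) {e : Fin d → ℝ}
    {c r : ℝ} (hr : 0 < r)
    (hc : ∀ x ∈ Icc 0 r, c ≤ ∑ i, Dg (ω + x • bump T s e) s i * e i) :
    c * r ≤ g (ω + r • bump T s e) - g ω := by
  have hder : ∀ x : ℝ, HasDerivAt (fun x : ℝ => g (ω + x • bump T s e))
      (∑ i, Dg (ω + x • bump T s e) s i * e i) x := by
    intro x
    rw [hasDerivAt_iff_tendsto_slope_zero]
    refine (hg _ (hω.add ((cadlagOn_bump T s e).const_smul x)) s hs e).congr fun ε => ?_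
    rw [add_assoc, ← add_smul, smul_eq_mul, div_eq_inv_mul]
  obtain ⟨x, hx, hslope⟩ := exists_hasDerivAt_eq_slope (fun x : ℝ => g (ω + x • bump T s e)) _ hr
    (fun x _ => (hder x).continuousAt.continuousWithinAt) fun x _ => hder x
  have h := hc x (Ioo_subset_Icc_self hx)
  rw [hslope, sub_zero, le_div_iff₀ hr] at h
  simpa using h

/-- The staircase with `m` jumps of size `1 / n` at the points `a + (k + 1) (b - a) / n`. -/
noncomputable def staircase (T : ℝ) {d : ℕ} (a b : ℝ) (e : Fin d → ℝ) (n m : ℕ) : ℝ → Fin d → ℝ :=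
  ∑ k ∈ Finset.range m, (1 / (n : ℝ)) • bump T (a + (k + 1) * (b - a) / n) e

/-- The continuous ramp rising from `0` at `a` to `e` at `b`. -/
noncomputable def ramp {d : ℕ} (a b : ℝ) (e : Fin d → ℝ) : ℝ → Fin d → ℝ :=
  fun u => max 0 (min 1 ((u - a) / (b - a))) • e

theorem continuous_ramp {d : ℕ} (a b : ℝ) (e : Fin d → ℝ) : Continuous (ramp a b e) := by
  unfold ramp
  fun_prop

theorem staircase_succ (T : ℝ) {d : ℕ} (a b : ℝ) (e : Fin d → ℝ) (n m : ℕ) :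
    staircase T a b e n (m + 1) =
      staircase T a b e n m + (1 / (n : ℝ)) • bump T (a + (m + 1) * (b - a) / n) e :=
  Finset.sum_range_succ _ _

theorem cadlagOn_staircase (T : ℝ) {d : ℕ} (a b : ℝ) (e : Fin d → ℝ) (n m : ℕ) :
    CadlagOn T (staircase T a b e n m) := by
  induction m with
  | zero => exact (show Continuous (0 : ℝ → Fin d → ℝ) from continuous_const).continuousOn.cadlagOn
  | succ m ih =>
    rw [staircase_succ]
    exact ih.add ((cadlagOn_bump T _ e).const_smul _)

theorem norm_bump_le (T : ℝ) {d : ℕ} (s : ℝ) (e : Fin d → ℝ) (u : ℝ) : ‖bump T s e u‖ ≤ ‖e‖ :=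
  norm_indicator_le_norm_self (fun _ => e) u

theorem norm_staircase_le (T : ℝ) {d : ℕ} (a b : ℝ) (e : Fin d → ℝ) (n m : ℕ) (u : ℝ) :
    ‖staircase T a b e n m u‖ ≤ m / n * ‖e‖ := by
  rw [staircase, Finset.sum_apply]
  refine (norm_sum_le_of_le (f := fun k : ℕ => (1 / (n : ℝ)) • bump T (a + (k + 1) * (b - a) / n) e u)
    (n := fun _ => 1 / (n : ℝ) * ‖e‖) _ fun k _ => ?_).trans ?_
  · rw [norm_smul, Real.norm_of_nonneg (by positivity)]
    gcongr
    exact norm_bump_le _ _ _ _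
  · rw [Finset.sum_const, Finset.card_range, nsmul_eq_mul]
    exact le_of_eq (by ring)

theorem sum_range_ite_succ_le (N m : ℕ) :
    ∑ k ∈ Finset.range m, (if k + 1 ≤ N then (1 : ℝ) else 0) = (min m N : ℕ) := by
  induction m with
  | zero => simp
  | succ m ih =>
    rw [Finset.sum_range_succ, ih]
    split_ifs with h
    · rw [min_eq_left h, min_eq_left (by omega)]
      push_cast
      ring
    · rw [min_eq_right (by omega), min_eq_right (by omega), add_zero]

theorem staircase_apply {T : ℝ} {d : ℕ} {a b : ℝ} (hab : a < b) (e : Fin d → ℝ) {n : ℕ}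
    (hn : 0 < n) (m : ℕ) {u : ℝ} (hu : u ≤ T) :
    staircase T a b e n m u = ((min m ⌊n * ((u - a) / (b - a))⌋₊ : ℕ) / (n : ℝ)) • e := by
  have hba : 0 < b - a := sub_pos.2 hab
  have hn' : (0 : ℝ) < n := by exact_mod_cast hn
  rw [← sum_range_ite_succ_le, Finset.sum_div, Finset.sum_smul, staircase, Finset.sum_apply]
  refine Finset.sum_congr rfl fun k _ => ?_
  have hiff : k + 1 ≤ ⌊n * ((u - a) / (b - a))⌋₊ ↔ u ∈ Icc (a + (k + 1) * (b - a) / n) T := by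
    rw [Nat.le_floor_iff' (by omega), mem_Icc, and_iff_left hu, ← le_sub_iff_add_le',
      div_le_iff₀ hn', ← mul_div_assoc, le_div_iff₀ hba]
    push_cast
    rw [mul_comm (n : ℝ)]
  by_cases h : k + 1 ≤ ⌊n * ((u - a) / (b - a))⌋₊
  · rw [if_pos h, Pi.smul_apply, bump, indicator_of_mem (hiff.1 h)]
  · rw [if_neg h, Pi.smul_apply, bump, indicator_of_notMem fun h' => h (hiff.2 h')]
    simp

theorem norm_staircase_sub_ramp_le {T : ℝ} {d : ℕ} {a b : ℝ} (hab : a < b) (e : Fin d → ℝ)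
    {n : ℕ} (hn : 0 < n) {u : ℝ} (hu : u ≤ T) :
    ‖staircase T a b e n n u - ramp a b e u‖ ≤ 1 / n * ‖e‖ := by
  have hn' : (0 : ℝ) < n := by exact_mod_cast hn
  rw [staircase_apply hab e hn n hu, ramp, ← sub_smul, norm_smul]
  gcongr
  set x := (u - a) / (b - a)
  rw [Real.norm_eq_abs]
  have key : |((min n ⌊n * x⌋₊ : ℕ) : ℝ) - n * max 0 (min 1 x)| ≤ 1 := by
    rw [mul_max_of_nonneg _ _ hn'.le, mul_min_of_nonneg _ _ hn'.le, mul_zero, mul_one]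
    push_cast
    rcases le_total 0 x with hx | hx
    · have hx' : 0 ≤ n * x := by positivity
      have h1 := Nat.floor_le hx'
      have h2 := Nat.lt_floor_add_one (n * x)
      rw [max_eq_right (by positivity)]
      refine (abs_min_sub_min_le_max _ _ _ _).trans ?_
      rw [sub_self, abs_zero, max_eq_right (abs_nonneg _), abs_le]
      constructor <;> linarith
    · have hx' : n * x ≤ 0 := mul_nonpos_of_nonneg_of_nonpos hn'.le hx
      rw [Nat.floor_of_nonpos hx', max_eq_left ((min_le_right _ _).trans hx')]
      simp
  have : ((min n ⌊n * x⌋₊ : ℕ) : ℝ) / n - max 0 (min 1 x)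
      = (((min n ⌊n * x⌋₊ : ℕ) : ℝ) - n * max 0 (min 1 x)) / n := by
    field_simp
  rw [this, abs_div, abs_of_pos hn']
  gcongr

theorem tendstoUniformlyOn_staircase (T : ℝ) {d : ℕ} {a b : ℝ} (hab : a < b) (e : Fin d → ℝ) :
    TendstoUniformlyOn (fun n : ℕ => staircase T a b e (n + 1) (n + 1)) (ramp a b e) atTop
      (Icc 0 T) := by
  rw [Metric.tendstoUniformlyOn_iff]
  intro ε hε
  have hz : Tendsto (fun n : ℕ => 1 / ((n : ℝ) + 1) * ‖e‖) atTop (nhds 0) := by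
    simpa using tendsto_one_div_add_atTop_nhds_zero_nat.mul_const ‖e‖
  filter_upwards [hz.eventually_lt_const hε] with n hn u hu
  rw [dist_comm, dist_eq_norm]
  refine (norm_staircase_sub_ramp_le hab e n.succ_pos hu.2).trans_lt ?_
  simpa using hn

/-- If the derivative in direction `e` is at least `c` near `ω` for all times in `(a, b]`, then
`g` grows at least by `c` times the fraction of the staircase that has been climbed. -/
theorem HasPathwiseMalliavinDeriv.mul_le_staircase_sub {T : ℝ} {d : ℕ}
    {g : (ℝ → Fin d → ℝ) → ℝ} {Dg : (ℝ → Fin d → ℝ) → ℝ → Fin d → ℝ}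
    (hg : HasPathwiseMalliavinDeriv T g Dg) {ω : ℝ → Fin d → ℝ} (hω : CadlagOn T ω)
    {a b : ℝ} (ha : 0 ≤ a) (hab : a < b) (hb : b ≤ T) {e : Fin d → ℝ} {c : ℝ}
    (hc : ∀ s ∈ Ioc a b, ∀ η, CadlagOn T η → (∀ u ∈ Icc 0 T, ‖η u - ω u‖ ≤ ‖e‖) →
      c ≤ ∑ i, Dg η s i * e i) {n m : ℕ} (hn : 0 < n) (hm : m ≤ n) :
    c * (m / n) ≤ g (ω + staircase T a b e n m) - g ω := by
  have hn' : (0 : ℝ) < n := by exact_mod_cast hn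
  have hba : 0 < b - a := sub_pos.2 hab
  induction m with
  | zero => simp [staircase]
  | succ m ih =>
    have hmn : (m : ℝ) + 1 ≤ n := by exact_mod_cast hm
    have hs : a + (m + 1) * (b - a) / n ∈ Ioc a b := by
      refine ⟨lt_add_of_pos_right _ (by positivity), ?_⟩
      rw [← le_sub_iff_add_le', div_le_iff₀ hn', mul_comm]
      gcongr
    have hstep := hg.mul_le_sub (hω.add (cadlagOn_staircase T a b e n m))
      (s := a + (m + 1) * (b - a) / n) ⟨ha.trans hs.1.le, hs.2.trans hb⟩ (e := e) (c := c)
      (r := 1 / n) (by positivity) fun x hx => by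
        refine hc _ hs _ ((hω.add (cadlagOn_staircase T a b e n m)).add
          ((cadlagOn_bump T _ e).const_smul x)) fun u _ => ?_
        rw [Pi.add_apply, Pi.add_apply, add_assoc, add_sub_cancel_left, Pi.smul_apply]
        have hbump : ‖x • bump T (a + (m + 1) * (b - a) / n) e u‖ ≤ 1 / n * ‖e‖ := by
          rw [norm_smul, Real.norm_of_nonneg hx.1]
          gcongr
          · exact hx.2
          · exact norm_bump_le _ _ _ _
        refine (norm_add_le_of_le (norm_staircase_le T a b e n m u) hbump).trans ?_
        rw [← add_mul, ← add_div]
        exact mul_le_of_le_one_left (norm_nonneg e) ((div_le_one hn').2 hmn)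
    rw [staircase_succ, ← add_assoc]
    have heq : c * (((m + 1 : ℕ) : ℝ) / n) = c * (m / n) + c * (1 / n) := by
      push_cast
      ring
    linarith [ih (by omega)]

/-- If `g` vanishes on continuous paths, then the left limits of its derivative vanish there. -/
theorem HasPathwiseMalliavinDeriv.tendsto_zero_of_eq_zero {T : ℝ} {d : ℕ}
    {g : (ℝ → Fin d → ℝ) → ℝ} {Dg : (ℝ → Fin d → ℝ) → ℝ → Fin d → ℝ}
    (hg : HasPathwiseMalliavinDeriv T g Dg) (hcont : UnifContOnCadlag T g)
    (hll : HasLeftLimits T Dg) (hzero : ∀ ω, ContinuousOn ω (Icc 0 T) → g ω = 0)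
    {ω : ℝ → Fin d → ℝ} (hω : ContinuousOn ω (Icc 0 T)) {t : ℝ} (ht : t ∈ Ioc 0 T) :
    Tendsto (Dg ω) (nhdsWithin t (Iio t)) (nhds 0) := by
  obtain ⟨l, hl⟩ := hll.exists_limit_forall_mem_nhds hω.cadlagOn ht
  have hl0 : l = 0 := by
    by_contra hne
    have hpos : 0 < ∑ i, l i * l i := by
      obtain ⟨i, hi⟩ := Function.ne_iff.1 hne
      exact Finset.sum_pos' (fun i _ => mul_self_nonneg _) ⟨i, Finset.mem_univ i, mul_self_pos.2 hi⟩
    set c := (∑ i, l i * l i) / 2 with hcdef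
    have hnhds : {v : Fin d → ℝ | c < ∑ i, v i * l i} ∈ nhds l :=
      (isOpen_lt continuous_const (by fun_prop)).mem_nhds (by simp only [mem_ofPred_eq]; linarith)
    obtain ⟨δ, hδ, hU⟩ := hl _ hnhds
    obtain ⟨ε, hε, hεδ⟩ : ∃ ε > 0, ε * ‖l‖ ≤ δ :=
      ⟨δ / ‖l‖, div_pos hδ (norm_pos_iff.2 hne), (div_mul_cancel₀ _ (norm_ne_zero_iff.2 hne)).le⟩
    obtain ⟨a, ha, hat⟩ := exists_between (max_lt ht.1 (sub_lt_self t hδ))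
    obtain ⟨b, hab, hbt⟩ := exists_between hat
    have hstair : ∀ n : ℕ, ε * c ≤ g (ω + staircase T a b (ε • l) (n + 1) (n + 1)) - g ω := by
      intro n
      have h := hg.mul_le_staircase_sub hω.cadlagOn ((le_max_left _ _).trans ha.le) hab
        (hbt.le.trans ht.2) (e := ε • l) (c := ε * c) (fun s hs η hη hηω => ?_)
        n.succ_pos le_rfl
      · rwa [div_self (by positivity), mul_one] at h
      · have hlt := hU s ⟨((le_max_right _ _).trans_lt ha).trans hs.1, hs.2.trans_lt hbt⟩ η hη
          fun u hu => (hηω u hu).trans (by rwa [norm_smul, Real.norm_of_nonneg hε.le])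
        rw [mem_ofPred_eq] at hlt
        have heq : ∑ i, Dg η s i * (ε • l) i = ε * ∑ i, Dg η s i * l i := by
          rw [Finset.mul_sum]
          exact Finset.sum_congr rfl fun i _ => by simp only [Pi.smul_apply, smul_eq_mul]; ring
        rw [heq]
        gcongr
    have hramp : ContinuousOn (ω + ramp a b (ε • l)) (Icc 0 T) :=
      hω.add (continuous_ramp a b _).continuousOn
    have hlim := hcont (ω + ramp a b (ε • l))
      (fun n => ω + staircase T a b (ε • l) (n + 1) (n + 1)) hramp.cadlagOn
      (fun n => hω.cadlagOn.add (cadlagOn_staircase _ _ _ _ _ _)) (by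
        have h := tendstoUniformlyOn_staircase T hab (ε • l)
        rw [Metric.tendstoUniformlyOn_iff] at h ⊢
        simpa using h)
    have hle := ge_of_tendsto (hlim.sub_const (g ω)) (Eventually.of_forall hstair)
    rw [hzero _ hramp, hzero _ hω, sub_zero] at hle
    have : 0 < ε * c := mul_pos hε (half_pos hpos)
    linarith
  subst hl0
  intro U hU
  obtain ⟨δ, hδ, h⟩ := hl U hU
  refine mem_map.2 (mem_of_superset (Ioo_mem_nhdsLT (sub_lt_self t hδ)) fun s hs => ?_)
  exact h s hs ω hω.cadlagOn fun u _ => by simpa using hδ.le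

/-- A function whose left limits on `(a, b]` all equal `y` takes the value `y` off a countable
subset of `(a, b]`. -/
theorem countable_setOf_ne_of_tendsto_nhdsLT {E : Type*} [MetricSpace E] {h : ℝ → E} {y : E}
    {a b : ℝ} (hlim : ∀ t ∈ Ioc a b, Tendsto h (nhdsWithin t (Iio t)) (nhds y)) :
    {t ∈ Ioc a b | h t ≠ y}.Countable := by
  have hsub : {t ∈ Ioc a b | h t ≠ y} ⊆
      ⋃ n : ℕ, {t ∈ Ioc a b | 1 / ((n : ℝ) + 1) < dist (h t) y} := by
    intro t ht
    obtain ⟨n, hn⟩ := exists_nat_one_div_lt (dist_pos.2 ht.2)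
    exact mem_iUnion.2 ⟨n, ht.1, hn⟩
  refine (countable_iUnion fun n => ?_).mono hsub
  refine (countable_setOfPred_isolated_left_within
    (s := {t ∈ Ioc a b | 1 / ((n : ℝ) + 1) < dist (h t) y})).mono fun t ht => mem_ofPred_eq ▸ And.intro ht ?_
  rw [← empty_mem_iff_bot]
  have hball := (hlim t ht.1).eventually
    (Metric.ball_mem_nhds y (show (0 : ℝ) < 1 / ((n : ℝ) + 1) by positivity))
  filter_upwards [nhdsWithin_mono t inter_subset_right hball, self_mem_nhdsWithin] with s hs hs'
  exact lt_asymm hs hs'.1.2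

/-- Let `f̃₁, f̃₂ : D([0,T];ℝ^d) → ℝ` be pathwise Malliavin differentiable,
with `f̃ᵢ` and each `ω ↦ 𝔻_t f̃ᵢ(ω)` uniformly continuous, and with `𝔻f̃ᵢ` having left limits
and boundedness preserving. If `f̃₁ = f̃₂` on continuous paths, then for every continuous path
`ω` one has `𝔻_t f̃₁(ω) = 𝔻_t f̃₂(ω)` for Lebesgue-almost every `t ∈ [0,T]`; i.e. on continuous
paths the pathwise Malliavin derivative does not depend on the chosen càdlàg extension, up to a
Lebesgue-null set of times. -/
theorem statement_5 (T : ℝ) (hT : 0 < T) {d : ℕ}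
    (f₁ f₂ : (ℝ → Fin d → ℝ) → ℝ) (Df₁ Df₂ : (ℝ → Fin d → ℝ) → ℝ → Fin d → ℝ)
    (hdiff₁ : HasPathwiseMalliavinDeriv T f₁ Df₁)
    (hdiff₂ : HasPathwiseMalliavinDeriv T f₂ Df₂)
    (hfcont₁ : UnifContOnCadlag T f₁) (hfcont₂ : UnifContOnCadlag T f₂)
    (hDcont₁ : ∀ t ∈ Set.Icc (0 : ℝ) T, UnifContOnCadlagVec T (fun ω => Df₁ ω t))
    (hDcont₂ : ∀ t ∈ Set.Icc (0 : ℝ) T, UnifContOnCadlagVec T (fun ω => Df₂ ω t))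
    (hll₁ : HasLeftLimits T Df₁) (hll₂ : HasLeftLimits T Df₂)
    (hbp₁ : BoundednessPreserving T Df₁) (hbp₂ : BoundednessPreserving T Df₂)
    (hagree : ∀ ω : ℝ → Fin d → ℝ, ContinuousOn ω (Set.Icc 0 T) → f₁ ω = f₂ ω)
    (ω : ℝ → Fin d → ℝ) (hω : ContinuousOn ω (Set.Icc 0 T)) :
    ∀ᵐ t ∂(volume.restrict (Set.Icc (0 : ℝ) T)), Df₁ ω t = Df₂ ω t := by
  have hlim : ∀ t ∈ Ioc 0 T, Tendsto ((Df₁ - Df₂) ω) (nhdsWithin t (Iio t)) (nhds 0) :=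
    fun t ht => (hdiff₁.sub hdiff₂).tendsto_zero_of_eq_zero (hfcont₁.sub hfcont₂)
      (hll₁.sub hll₂) (fun η hη => sub_eq_zero.2 (hagree η hη)) hω ht
  have hcount := (countable_setOf_ne_of_tendsto_nhdsLT hlim).union (countable_singleton (0 : ℝ))
  rw [ae_restrict_iff' measurableSet_Icc]
  filter_upwards [hcount.ae_notMem volume] with t ht htT
  by_contra hne
  refine ht ?_
  rcases htT.1.eq_or_lt with h0 | h0
  · exact Or.inr h0.symm
  · exact Or.inl ⟨⟨h0, htT.2⟩, sub_ne_zero.2 hne⟩
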